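/- arXiv:math/0511137 — 3 statements merged into one kernel-verified Lean document; each statement's English description precedes it below -/
import Mathlib

section
/- Kolmogorov's theorem: Let X be a nonempty set and let K : X × X → ℂ be positive definite. Then there exists a complex Hilbert space H_K and a map v_K : X → H_K such that the linear span of {v_K(x) : x ∈ X} is dense in H_K and ⟨v_K(x), v_K(y)⟩ = K(x,y) for all x, y ∈ X. Moreover, (H_K, v_K) is unique up to unitary isomorphism: if (H, v) and (H', v') are two such pairs, then there exists a unitary operator W : H → H' with W(v(x)) = v'(x) for all x ∈ X. -/
open scoped InnerProductSpace ComplexOrder Classical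
open Complex

noncomputable section

/-- A kernel `K : X × X → ℂ` is positive definite if every finite quadratic form
`∑ i j, K (x i) (x j) * ξ i * conj (ξ j)` is a nonnegative real number
(expressed via the partial order on `ℂ`). -/
def IsPosDefKernel {X : Type*} (K : X → X → ℂ) : Prop :=
  ∀ (n : ℕ) (x : Fin n → X) (ξ : Fin n → ℂ),
    0 ≤ ∑ i, ∑ j, K (x i) (x j) * ξ i * (starRingEnd ℂ) (ξ j)

/-- `(H, v)` is a Kolmogorov representation of the kernel `K`: the span of the range of `v`
is dense and inner products of the `v x` reproduce `K`.  Mathlib's inner product is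
conjugate-linear in the first variable, while the paper's is conjugate-linear in the second,
so the paper's `⟨v x, v y⟩ = K x y` reads `⟪v y, v x⟫_ℂ = K x y` here. -/
def IsKolmogorovRep {X : Type*} (K : X → X → ℂ) (H : Type*) [NormedAddCommGroup H]
    [InnerProductSpace ℂ H] (v : X → H) : Prop :=
  Dense (↑(Submodule.span ℂ (Set.range v)) : Set H) ∧
    ∀ x y : X, ⟪v y, v x⟫_ℂ = K x y

/-- `L² ≤ c K K'` in the sense of Dutkay. -/
def KernelSqLE {X : Type*} (L K K' : X → X → ℂ) (c : ℝ) : Prop :=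
  ∀ (m n : ℕ) (x : Fin m → X) (y : Fin n → X) (ξ : Fin m → ℂ) (η : Fin n → ℂ),
    ‖∑ i, ∑ j, L (x i) (y j) * ξ i * (starRingEnd ℂ) (η j)‖ ^ 2 ≤
      c * (∑ i, ∑ i', K (x i) (x i') * ξ i * (starRingEnd ℂ) (ξ i')).re *
        (∑ j, ∑ j', K' (y j) (y j') * η j * (starRingEnd ℂ) (η j')).re

/-- `K' ≤ c K` for kernels, via the partial order on `ℂ`. -/
def KernelLE {X : Type*} (K' K : X → X → ℂ) (c : ℝ) : Prop :=
  ∀ (n : ℕ) (x : Fin n → X) (ξ : Fin n → ℂ),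
    ∑ i, ∑ j, K' (x i) (x j) * ξ i * (starRingEnd ℂ) (ξ j) ≤
      (c : ℂ) * ∑ i, ∑ j, K (x i) (x j) * ξ i * (starRingEnd ℂ) (ξ j)

/-- A bounded operator is positive if `⟨S v, v⟩ ≥ 0` for all `v` (paper convention;
in Mathlib's convention this is `0 ≤ ⟪v, S v⟫`). -/
def IsPositiveOp {H : Type*} [NormedAddCommGroup H] [InnerProductSpace ℂ H]
    (S : H →L[ℂ] H) : Prop :=
  ∀ v : H, 0 ≤ ⟪v, S v⟫_ℂ

/-- A family of vectors is a normalized tight frame. -/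
def IsNormalizedTightFrame {H : Type*} [NormedAddCommGroup H] [InnerProductSpace ℂ H]
    {ι : Type*} (v : ι → H) : Prop :=
  ∀ f : H, ∑' i, ‖⟪v i, f⟫_ℂ‖ ^ 2 = ‖f‖ ^ 2

/-- `P` is the orthogonal projection onto the set `S`: idempotent, self-adjoint,
with range `S`. -/
def IsOrthProjectionOnto {H : Type*} [NormedAddCommGroup H] [InnerProductSpace ℂ H]
    (P : H →L[ℂ] H) (S : Set H) : Prop :=
  (∀ v, P (P v) = P v) ∧ (∀ v w : H, ⟪P v, w⟫_ℂ = ⟪v, P w⟫_ℂ) ∧ Set.range P = S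

/-- The two covariance relations for a Gabor-type kernel on `ℤ²`. -/
def GaborCovariant (lam : ℂ) (K : ℤ × ℤ → ℤ × ℤ → ℂ) : Prop :=
  (∀ m n m' n' : ℤ, K (m + 1, n) (m' + 1, n') = K (m, n) (m', n')) ∧
  (∀ m n m' n' : ℤ, K (m, n + 1) (m', n' + 1) = lam ^ (m - m') * K (m, n) (m', n'))

/-- The vectors `U^m V^n ξ₀` of a Gabor type unitary system. -/
def gaborVec {H : Type*} [NormedAddCommGroup H] [InnerProductSpace ℂ H] [CompleteSpace H]
    (U V : unitary (H →L[ℂ] H)) (ξ₀ : H) (p : ℤ × ℤ) : H :=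
  ((U ^ p.1 * V ^ p.2 : unitary (H →L[ℂ] H)) : H →L[ℂ] H) ξ₀

/-- `(H, U, V, ξ₀)` is the Gabor type cyclic system associated to the kernel `K` and the
unimodular scalar `lam` : `U V = lam V U`, the vectors `U^m V^n ξ₀` span a dense subspace,
and their inner products reproduce `K`. -/
def IsGaborSystem {H : Type*} [NormedAddCommGroup H] [InnerProductSpace ℂ H] [CompleteSpace H]
    (lam : ℂ) (K : ℤ × ℤ → ℤ × ℤ → ℂ) (U V : unitary (H →L[ℂ] H)) (ξ₀ : H) : Prop :=
  ((U : H →L[ℂ] H) * (V : H →L[ℂ] H) = lam • ((V : H →L[ℂ] H) * (U : H →L[ℂ] H))) ∧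
  Dense (↑(Submodule.span ℂ (Set.range (gaborVec U V ξ₀))) : Set H) ∧
  ∀ m n m' n' : ℤ,
    ⟪gaborVec U V ξ₀ (m', n'), gaborVec U V ξ₀ (m, n)⟫_ℂ = K (m, n) (m', n')

universe u

/-!
A positive definite kernel is, up to transposition, an infinite positive semidefinite matrix, and a
Kolmogorov representation realises this matrix as the Gram matrix of a family with dense span.
Such a family is given by the kernel functions of the reproducing kernel Hilbert space of the
matrix. For uniqueness, the Gram matrix determines the norm of every linear combination of the
vectors, so `v x ↦ v' x` induces an isometry between dense subspaces, which extends by continuity.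
-/

lemma denseRange_linearCombination {R X M : Type*} [Semiring R] [AddCommMonoid M] [Module R M]
    [TopologicalSpace M] {v : X → M} (hv : Dense (Submodule.span R (Set.range v) : Set M)) :
    DenseRange (Finsupp.linearCombination R v) := by
  rwa [← Finsupp.range_linearCombination] at hv

section GramMatrix

variable {𝕜 X : Type*} [RCLike 𝕜]

section Seminormed

variable {E E' : Type*} [SeminormedAddCommGroup E] [InnerProductSpace 𝕜 E]
  [SeminormedAddCommGroup E'] [InnerProductSpace 𝕜 E']

lemma inner_linearCombination_linearCombination (v : X → E) (f g : X →₀ 𝕜) :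
    ⟪Finsupp.linearCombination 𝕜 v f, Finsupp.linearCombination 𝕜 v g⟫_𝕜 =
      f.sum fun x a ↦ g.sum fun y b ↦ star a * b * Matrix.gram 𝕜 v x y := by
  rw [Finsupp.linearCombination_apply, Finsupp.sum_inner]
  simp only [Finsupp.linearCombination_apply, Finsupp.inner_sum, inner_smul_left,
    inner_smul_right, Matrix.gram_apply, RCLike.star_def, mul_assoc, mul_left_comm]

lemma norm_linearCombination_eq_of_gram_eq {v : X → E} {v' : X → E'}
    (h : Matrix.gram 𝕜 v = Matrix.gram 𝕜 v') (f : X →₀ 𝕜) :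
    ‖Finsupp.linearCombination 𝕜 v f‖ = ‖Finsupp.linearCombination 𝕜 v' f‖ := by
  simp only [norm_eq_sqrt_re_inner (𝕜 := 𝕜), inner_linearCombination_linearCombination, h]

end Seminormed

theorem exists_linearIsometryEquiv_of_gram_eq {H H' : Type*}
    [NormedAddCommGroup H] [InnerProductSpace 𝕜 H] [CompleteSpace H]
    [NormedAddCommGroup H'] [InnerProductSpace 𝕜 H'] [CompleteSpace H']
    {v : X → H} {v' : X → H'} (hv : Dense (Submodule.span 𝕜 (Set.range v) : Set H))
    (hv' : Dense (Submodule.span 𝕜 (Set.range v') : Set H'))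
    (h : Matrix.gram 𝕜 v = Matrix.gram 𝕜 v') :
    ∃ W : H ≃ₗᵢ[𝕜] H', ∀ x, W (v x) = v' x := by
  have hd := denseRange_linearCombination hv
  have hd' := denseRange_linearCombination hv'
  have hnorm := norm_linearCombination_eq_of_gram_eq h.symm
  let e := LinearEquiv.refl 𝕜 (X →₀ 𝕜)
  refine ⟨e.extendOfIsometry _ _ hd hd' hnorm, fun x ↦ ?_⟩
  simpa [e] using e.extendOfIsometry_eq _ _ hd hd' hnorm (Finsupp.single x 1)

end GramMatrix

universe w

section ReproducingKernel

variable {𝕜 : Type w} {X : Type u} [RCLike 𝕜]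

section ScalarRKHS

variable (H : Type*) [NormedAddCommGroup H] [InnerProductSpace 𝕜 H] [CompleteSpace H]
  [RKHS 𝕜 H X 𝕜]

lemma gram_kerFun_one :
    Matrix.gram 𝕜 (fun x ↦ RKHS.kerFun H x (1 : 𝕜)) = (RKHS.kernel H).map (· 1) := by
  ext x y
  rw [Matrix.gram_apply, RKHS.kerFun_inner, RKHS.kerFun_apply]
  simp

lemma dense_span_range_kerFun_one :
    Dense (Submodule.span 𝕜 (Set.range fun x ↦ RKHS.kerFun H x (1 : 𝕜)) : Set H) := by
  rw [Submodule.dense_iff_topologicalClosure_eq_top, eq_top_iff, ← RKHS.kerFun_dense H]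
  refine Submodule.topologicalClosure_mono (Submodule.span_le.mpr ?_)
  rintro _ ⟨x, a, rfl⟩
  rw [← mul_one a, ← smul_eq_mul, map_smul]
  exact Submodule.smul_mem _ a (Submodule.subset_span ⟨x, rfl⟩)

end ScalarRKHS

lemma posSemidef_map_algebraMap {M : Matrix X X 𝕜} (hM : M.PosSemidef) :
    (M.map (algebraMap 𝕜 (𝕜 →L[𝕜] 𝕜))).PosSemidef := by
  have posSemidef_iff := (RKHS.posSemidef_tfae (K := M.map (algebraMap 𝕜 (𝕜 →L[𝕜] 𝕜)))).out 0 2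
  refine posSemidef_iff.mpr ⟨hM.isHermitian.map _ fun _ ↦ algebraMap_star_comm _, fun w ↦ ?_⟩
  have conj_apply (x y : X) : (starRingEnd 𝕜) (M y x) = M x y := hM.isHermitian.apply x y
  simpa [Algebra.algebraMap_eq_smul_one, conj_apply, mul_left_comm, mul_comm] using
    (RCLike.nonneg_iff.mp (hM.2 w)).1

theorem exists_dense_span_gram_eq {M : Matrix X X 𝕜} (hM : M.PosSemidef) :
    ∃ (H : Type (max u w)) (_ : NormedAddCommGroup H) (_ : InnerProductSpace 𝕜 H)
      (_ : CompleteSpace H) (v : X → H),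
      Dense (Submodule.span 𝕜 (Set.range v) : Set H) ∧ Matrix.gram 𝕜 v = M := by
  let N := M.map (algebraMap 𝕜 (𝕜 →L[𝕜] 𝕜))
  have : Fact N.PosSemidef := ⟨posSemidef_map_algebraMap hM⟩
  refine ⟨RKHS.OfKernel N, inferInstance, inferInstance, inferInstance,
    fun x ↦ RKHS.kerFun (RKHS.OfKernel N) x 1, dense_span_range_kerFun_one _, ?_⟩
  rw [gram_kerFun_one, RKHS.OfKernel.kernel_ofKernel]
  ext x y
  simp [N]

end ReproducingKernel

section Kernel

variable {X : Type*} {K : X → X → ℂ}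

lemma IsPosDefKernel.isHermitian (hK : IsPosDefKernel K) : (Matrix.of K).IsHermitian := by
  ext x y
  have im_self (z : X) : (K z z).im = 0 := by
    simpa using (Complex.nonneg_iff.mp (hK 1 ![z] ![1])).2.symm
  have im_add : (K x y).im + (K y x).im = 0 := by
    simpa [Fin.sum_univ_two, im_self] using (Complex.nonneg_iff.mp (hK 2 ![x, y] ![1, 1])).2.symm
  have re_sub : (K y x).re - (K x y).re = 0 := by
    simpa [Fin.sum_univ_two, im_self, sub_eq_add_neg, add_comm] using
      (Complex.nonneg_iff.mp (hK 2 ![x, y] ![1, I])).2.symm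
  exact Complex.ext (sub_eq_zero.mp re_sub) (neg_eq_of_add_eq_zero_left im_add)

lemma IsPosDefKernel.finsuppSum_nonneg (hK : IsPosDefKernel K) (ξ : X →₀ ℂ) :
    0 ≤ ξ.sum fun x a ↦ ξ.sum fun y b ↦ K x y * a * (starRingEnd ℂ) b := by
  let e := ξ.support.equivFin.symm
  have sum_support (f : X → ℂ) : ∑ x ∈ ξ.support, f x = ∑ i, f (e i) :=
    (Finset.sum_coe_sort _ f).symm.trans (e.sum_comp fun x ↦ f x).symm
  simpa only [Finsupp.sum, sum_support] using hK _ (fun i ↦ e i) (fun i ↦ ξ (e i))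

lemma IsPosDefKernel.posSemidef_transpose (hK : IsPosDefKernel K) :
    (Matrix.of K).transpose.PosSemidef := by
  refine ⟨hK.isHermitian.transpose, fun ξ ↦ ?_⟩
  rw [Finsupp.sum_comm]
  simpa only [Matrix.transpose_apply, Matrix.of_apply, RCLike.star_def, mul_assoc, mul_comm,
    mul_left_comm] using hK.finsuppSum_nonneg ξ

lemma isKolmogorovRep_iff_gram_eq {H : Type*} [NormedAddCommGroup H] [InnerProductSpace ℂ H]
    {v : X → H} : IsKolmogorovRep K H v ↔
      Dense (Submodule.span ℂ (Set.range v) : Set H) ∧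
        Matrix.gram ℂ v = (Matrix.of K).transpose := by
  rw [IsKolmogorovRep, ← Matrix.ext_iff, forall_comm]
  rfl

end Kernel

/-- **Kolmogorov's theorem.** Every positive definite kernel on a nonempty set admits a
Kolmogorov representation, unique up to a unitary isomorphism. -/
theorem kolmogorov_theorem {X : Type u} [Nonempty X] (K : X → X → ℂ)
    (hK : IsPosDefKernel K) :
    (∃ (H : Type u) (_ : NormedAddCommGroup H) (_ : InnerProductSpace ℂ H)
        (_ : CompleteSpace H) (v : X → H), IsKolmogorovRep K H v) ∧
    (∀ (H : Type*) (_ : NormedAddCommGroup H) (_ : InnerProductSpace ℂ H)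
        (_ : CompleteSpace H) (v : X → H)
        (H' : Type*) (_ : NormedAddCommGroup H') (_ : InnerProductSpace ℂ H')
        (_ : CompleteSpace H') (v' : X → H'),
        IsKolmogorovRep K H v → IsKolmogorovRep K H' v' →
          ∃ W : H ≃ₗᵢ[ℂ] H', ∀ x : X, W (v x) = v' x) := by
  simp only [isKolmogorovRep_iff_gram_eq]
  refine ⟨exists_dense_span_gram_eq hK.posSemidef_transpose, ?_⟩
  rintro H _ _ _ v H' _ _ _ v' ⟨hv, hgram⟩ ⟨hv', hgram'⟩
  exact exists_linearIsometryEquiv_of_gram_eq hv hv' (hgram.trans hgram'.symm)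
end
end

section
/- Let X be a nonempty set, let K, K' be positive definite maps on X with Kolmogorov representations (H_K, v_K) and (H_{K'}, v_{K'}), let L : X × X → ℂ, and suppose L² ≤ c K K' for some c > 0. Then there exists a unique bounded linear operator S : H_K → H_{K'} such that ⟨S v_K(x), v_{K'}(y)⟩ = L(x,y) for all x, y ∈ X, and moreover ‖S‖ ≤ √c. Conversely, if S : H_K → H_{K'} is any bounded linear operator, then there is a unique map L : X × X → ℂ satisfying ⟨S v_K(x), v_{K'}(y)⟩ = L(x,y) for all x, y ∈ X, and this L satisfies L² ≤ ‖S‖² K K'. -/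
open scoped InnerProductSpace ComplexOrder Classical
open Complex

noncomputable section

/-!
Through the Kolmogorov representations, `L² ≤ C² K K'` says that the sesquilinear form with matrix
`L` is bounded by `C` on the dense spans of the `v x` and the `v' y`. Its restriction to a single
`v x` is represented by a vector `u x` (Riesz), and testing `∑ i, ξ i • u (x i)` against the dense
span of the `v' y` shows that `v x ↦ u x` is bounded by `C`, hence extends to the operator `S`.
The converse is Cauchy-Schwarz.
-/

section FiniteCombinations

lemma exists_eq_sum_fin_single {α M : Type*} [AddCommMonoid M] (a : α →₀ M) :
    ∃ (n : ℕ) (x : Fin n → α) (ξ : Fin n → M), a = ∑ i, Finsupp.single (x i) (ξ i) := by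
  let e := a.support.equivFin.symm
  refine ⟨a.support.card, fun i => e i, fun i => a (e i), ?_⟩
  calc
    a = ∑ z ∈ a.support, Finsupp.single z (a z) := a.sum_single.symm
    _ = ∑ z : a.support, Finsupp.single (z : α) (a z) := (Finset.sum_coe_sort ..).symm
    _ = ∑ i, Finsupp.single (e i : α) (a (e i)) := (e.sum_comp _).symm

lemma mem_span_range_iff_exists_sum_fin {R M α : Type*} [Semiring R] [AddCommMonoid M]
    [Module R M] {v : α → M} {z : M} :
    z ∈ Submodule.span R (Set.range v) ↔
      ∃ (n : ℕ) (x : Fin n → α) (ξ : Fin n → R), ∑ i, ξ i • v (x i) = z := by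
  constructor
  · rw [Finsupp.mem_span_range_iff_exists_finsupp]
    rintro ⟨a, rfl⟩
    obtain ⟨n, x, ξ, rfl⟩ := exists_eq_sum_fin_single a
    refine ⟨n, x, ξ, ?_⟩
    simp [← Finsupp.linearCombination_apply]
  · rintro ⟨n, x, ξ, rfl⟩
    exact sum_mem fun i _ => Submodule.smul_mem _ _ (Submodule.subset_span ⟨x i, rfl⟩)

end FiniteCombinations

section DenseSpan

lemma exists_continuousLinearMap_of_norm_sum_smul_le {𝕜 X E F : Type*} [NormedField 𝕜]
    [SeminormedAddCommGroup E] [NormedSpace 𝕜 E]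
    [NormedAddCommGroup F] [NormedSpace 𝕜 F] [CompleteSpace F] {v : X → E} {u : X → F} {C : ℝ}
    (hv : Dense (Submodule.span 𝕜 (Set.range v) : Set E))
    (h : ∀ (n : ℕ) (x : Fin n → X) (ξ : Fin n → 𝕜),
      ‖∑ i, ξ i • u (x i)‖ ≤ C * ‖∑ i, ξ i • v (x i)‖) :
    ∃ S : E →L[𝕜] F, ∀ x, S (v x) = u x := by
  let V := Finsupp.linearCombination 𝕜 v
  let U := Finsupp.linearCombination 𝕜 u
  have hV : DenseRange V := by
    rwa [DenseRange, ← LinearMap.coe_range, Finsupp.range_linearCombination]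
  have hbound (a : X →₀ 𝕜) : ‖U a‖ ≤ C * ‖V a‖ := by
    obtain ⟨n, x, ξ, rfl⟩ := exists_eq_sum_fin_single a
    simpa [U, V] using h n x ξ
  refine ⟨U.extendOfNorm V, fun x => ?_⟩
  simpa [U, V] using LinearMap.extendOfNorm_eq hV ⟨C, hbound⟩ (Finsupp.single x 1)

lemma opNorm_le_of_dense {𝕜 E F : Type*} [NontriviallyNormedField 𝕜]
    [SeminormedAddCommGroup E] [NormedSpace 𝕜 E] [SeminormedAddCommGroup F] [NormedSpace 𝕜 F]
    {S : E →L[𝕜] F} {s : Set E} {C : ℝ} (hs : Dense s) (hC : 0 ≤ C)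
    (h : ∀ z ∈ s, ‖S z‖ ≤ C * ‖z‖) : ‖S‖ ≤ C :=
  S.opNorm_le_bound hC <| hs.induction h (isClosed_le (by fun_prop) (by fun_prop))

variable {𝕜 F : Type*} [RCLike 𝕜]

lemma norm_le_of_dense_of_norm_inner_le [SeminormedAddCommGroup F] [InnerProductSpace 𝕜 F]
    {s : Set F} {p : F} {C : ℝ} (hs : Dense s) (hC : 0 ≤ C)
    (h : ∀ z ∈ s, ‖⟪z, p⟫_𝕜‖ ≤ C * ‖z‖) : ‖p‖ ≤ C := by
  rw [← innerSL_apply_norm 𝕜 p]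
  refine opNorm_le_of_dense hs hC fun z hz => ?_
  simpa only [innerSL_apply_apply, norm_inner_symm p z] using h z hz

lemma exists_inner_eq_of_norm_sum_mul_le {Y : Type*} [NormedAddCommGroup F]
    [InnerProductSpace 𝕜 F] [CompleteSpace F] {w : Y → F} {l : Y → 𝕜} {C : ℝ}
    (hw : Dense (Submodule.span 𝕜 (Set.range w) : Set F))
    (h : ∀ (n : ℕ) (y : Fin n → Y) (η : Fin n → 𝕜),
      ‖∑ j, η j * l (y j)‖ ≤ C * ‖∑ j, η j • w (y j)‖) :
    ∃ p : F, ∀ y, ⟪p, w y⟫_𝕜 = l y := by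
  obtain ⟨f, hf⟩ := exists_continuousLinearMap_of_norm_sum_smul_le hw h
  exact ⟨(InnerProductSpace.toDual 𝕜 F).symm f, fun y => by
    rw [InnerProductSpace.toDual_symm_apply, hf]⟩

end DenseSpan

/-- The sesquilinear form with matrix `L` on finite combinations of the vectors `v x` and `w y` is
bounded by `C`. For the Gram kernels `K` of `v` and `K'` of `w` this is the relation
`L² ≤ C² K K'`, with square roots taken. -/
def IsBoundedBikernel {𝕜 X Y E F : Type*} [RCLike 𝕜] [SeminormedAddCommGroup E] [NormedSpace 𝕜 E]
    [SeminormedAddCommGroup F] [NormedSpace 𝕜 F]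
    (L : X → Y → 𝕜) (v : X → E) (w : Y → F) (C : ℝ) : Prop :=
  ∀ (m n : ℕ) (x : Fin m → X) (y : Fin n → Y) (ξ : Fin m → 𝕜) (η : Fin n → 𝕜),
    ‖∑ i, ∑ j, L (x i) (y j) * ξ i * (starRingEnd 𝕜) (η j)‖ ≤
      C * ‖∑ i, ξ i • v (x i)‖ * ‖∑ j, η j • w (y j)‖

lemma sum_sum_mul_eq_inner {𝕜 X Y F ι κ : Type*} [RCLike 𝕜] [SeminormedAddCommGroup F]
    [InnerProductSpace 𝕜 F] [Fintype ι] [Fintype κ] {L : X → Y → 𝕜} {u : X → F} {w : Y → F}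
    (h : ∀ x y, ⟪w y, u x⟫_𝕜 = L x y) (x : ι → X) (y : κ → Y) (ξ : ι → 𝕜) (η : κ → 𝕜) :
    ∑ i, ∑ j, L (x i) (y j) * ξ i * (starRingEnd 𝕜) (η j) =
      ⟪∑ j, η j • w (y j), ∑ i, ξ i • u (x i)⟫_𝕜 := by
  simp only [inner_sum, sum_inner, inner_smul_left, inner_smul_right, h, Finset.mul_sum]
  exact Finset.sum_congr rfl fun i _ => Finset.sum_congr rfl fun j _ => by ring

section BoundedBikernel

variable {𝕜 X Y E F : Type*} [RCLike 𝕜] [SeminormedAddCommGroup E] [NormedSpace 𝕜 E]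
  {L : X → Y → 𝕜} {v : X → E} {w : Y → F} {C : ℝ}

section Bounds

variable [SeminormedAddCommGroup F] [InnerProductSpace 𝕜 F]

lemma isBoundedBikernel_opNorm {S : E →L[𝕜] F} (hS : ∀ x y, ⟪w y, S (v x)⟫_𝕜 = L x y) :
    IsBoundedBikernel L v w ‖S‖ := by
  intro m n x y ξ η
  calc
    _ = ‖⟪∑ j, η j • w (y j), S (∑ i, ξ i • v (x i))⟫_𝕜‖ := by
      simp only [sum_sum_mul_eq_inner hS, map_sum, map_smul]
    _ ≤ ‖∑ j, η j • w (y j)‖ * ‖S (∑ i, ξ i • v (x i))‖ := norm_inner_le_norm _ _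
    _ ≤ ‖∑ j, η j • w (y j)‖ * (‖S‖ * ‖∑ i, ξ i • v (x i)‖) := by gcongr; exact S.le_opNorm _
    _ = _ := mul_comm _ _

namespace IsBoundedBikernel

lemma norm_sum_smul_le (hL : IsBoundedBikernel L v w C)
    (hw : Dense (Submodule.span 𝕜 (Set.range w) : Set F)) (hC : 0 ≤ C) {u : X → F}
    (hu : ∀ x y, ⟪w y, u x⟫_𝕜 = L x y) (n : ℕ) (x : Fin n → X) (ξ : Fin n → 𝕜) :
    ‖∑ i, ξ i • u (x i)‖ ≤ C * ‖∑ i, ξ i • v (x i)‖ := by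
  refine norm_le_of_dense_of_norm_inner_le (𝕜 := 𝕜) hw (by positivity) fun z hz => ?_
  obtain ⟨k, y, η, rfl⟩ := mem_span_range_iff_exists_sum_fin.1 hz
  rw [← sum_sum_mul_eq_inner hu]
  exact hL n k x y ξ η

lemma opNorm_le (hL : IsBoundedBikernel L v w C)
    (hv : Dense (Submodule.span 𝕜 (Set.range v) : Set E))
    (hw : Dense (Submodule.span 𝕜 (Set.range w) : Set F)) (hC : 0 ≤ C) {S : E →L[𝕜] F}
    (hS : ∀ x y, ⟪w y, S (v x)⟫_𝕜 = L x y) : ‖S‖ ≤ C := by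
  refine opNorm_le_of_dense hv hC fun z hz => ?_
  obtain ⟨n, x, ξ, rfl⟩ := mem_span_range_iff_exists_sum_fin.1 hz
  simpa only [map_sum, map_smul] using hL.norm_sum_smul_le hw hC hS n x ξ

end IsBoundedBikernel

end Bounds

variable [NormedAddCommGroup F] [InnerProductSpace 𝕜 F]

namespace IsBoundedBikernel

lemma exists_inner_eq [CompleteSpace F] (hL : IsBoundedBikernel L v w C)
    (hw : Dense (Submodule.span 𝕜 (Set.range w) : Set F)) (x : X) :
    ∃ u : F, ∀ y, ⟪w y, u⟫_𝕜 = L x y := by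
  have hbound (n : ℕ) (y : Fin n → Y) (η : Fin n → 𝕜) :
      ‖∑ j, η j * (starRingEnd 𝕜) (L x (y j))‖ ≤ C * ‖v x‖ * ‖∑ j, η j • w (y j)‖ := by
    rw [← RCLike.norm_conj]
    simpa [mul_comm] using hL 1 n (fun _ => x) y 1 η
  obtain ⟨u, hu⟩ :=
    exists_inner_eq_of_norm_sum_mul_le (l := fun y => (starRingEnd 𝕜) (L x y)) hw hbound
  exact ⟨u, fun y => by rw [← inner_conj_symm, hu, RCLike.conj_conj]⟩

lemma exists_continuousLinearMap [CompleteSpace F] (hL : IsBoundedBikernel L v w C)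
    (hv : Dense (Submodule.span 𝕜 (Set.range v) : Set E))
    (hw : Dense (Submodule.span 𝕜 (Set.range w) : Set F)) (hC : 0 ≤ C) :
    ∃ S : E →L[𝕜] F, ∀ x y, ⟪w y, S (v x)⟫_𝕜 = L x y := by
  choose u hu using hL.exists_inner_eq hw
  obtain ⟨S, hS⟩ :=
    exists_continuousLinearMap_of_norm_sum_smul_le hv (hL.norm_sum_smul_le hw hC hu)
  exact ⟨S, fun x y => by rw [hS, hu]⟩

end IsBoundedBikernel

lemma continuousLinearMap_ext_inner (hv : Dense (Submodule.span 𝕜 (Set.range v) : Set E))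
    (hw : Dense (Submodule.span 𝕜 (Set.range w) : Set F)) {S T : E →L[𝕜] F}
    (h : ∀ x y, ⟪w y, S (v x)⟫_𝕜 = ⟪w y, T (v x)⟫_𝕜) : S = T := by
  have hzero : IsBoundedBikernel (0 : X → Y → 𝕜) v w 0 := by simp [IsBoundedBikernel]
  have hnorm : ‖S - T‖ ≤ 0 :=
    hzero.opNorm_le hv hw le_rfl fun x y => by simp [inner_sub_right, h]
  ext z
  simpa [sub_eq_zero] using (S - T).le_of_opNorm_le hnorm z

theorem intertwining_operator_general [CompleteSpace F]
    (hv : Dense (Submodule.span 𝕜 (Set.range v) : Set E))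
    (hw : Dense (Submodule.span 𝕜 (Set.range w) : Set F)) :
    (∀ (L : X → Y → 𝕜) (C : ℝ), 0 ≤ C → IsBoundedBikernel L v w C →
      (∃! S : E →L[𝕜] F, ∀ x y, ⟪w y, S (v x)⟫_𝕜 = L x y) ∧
      (∀ S : E →L[𝕜] F, (∀ x y, ⟪w y, S (v x)⟫_𝕜 = L x y) → ‖S‖ ≤ C)) ∧
    (∀ S : E →L[𝕜] F,
      (∃! L : X → Y → 𝕜, ∀ x y, ⟪w y, S (v x)⟫_𝕜 = L x y) ∧
      (∀ L : X → Y → 𝕜, (∀ x y, ⟪w y, S (v x)⟫_𝕜 = L x y) → IsBoundedBikernel L v w ‖S‖)) := by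
  refine ⟨fun L C hC hL => ⟨?_, fun S hS => hL.opNorm_le hv hw hC hS⟩,
    fun S => ⟨?_, fun L hL => isBoundedBikernel_opNorm hL⟩⟩
  · obtain ⟨S, hS⟩ := hL.exists_continuousLinearMap hv hw hC
    exact ⟨S, hS, fun T hT => continuousLinearMap_ext_inner hv hw fun x y => by rw [hT, hS]⟩
  · exact ⟨fun x y => ⟪w y, S (v x)⟫_𝕜, fun _ _ => rfl,
      fun L hL => funext₂ fun x y => (hL x y).symm⟩

end BoundedBikernel

section KolmogorovRep

variable {X H H' : Type*} [NormedAddCommGroup H] [InnerProductSpace ℂ H]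
  [NormedAddCommGroup H'] [InnerProductSpace ℂ H'] {K K' L : X → X → ℂ} {v : X → H} {v' : X → H'}

lemma IsKolmogorovRep.re_sum_sum_eq_norm_sq (h : IsKolmogorovRep K H v) {ι : Type*} [Fintype ι]
    (x : ι → X) (ξ : ι → ℂ) :
    (∑ i, ∑ j, K (x i) (x j) * ξ i * (starRingEnd ℂ) (ξ j)).re = ‖∑ i, ξ i • v (x i)‖ ^ 2 := by
  rw [sum_sum_mul_eq_inner h.2]
  exact inner_self_eq_norm_sq (𝕜 := ℂ) _

lemma kernelSqLE_sq_iff_isBoundedBikernel (h : IsKolmogorovRep K H v)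
    (h' : IsKolmogorovRep K' H' v') {C : ℝ} (hC : 0 ≤ C) :
    KernelSqLE L K K' (C ^ 2) ↔ IsBoundedBikernel L v v' C := by
  have hsq (a : ℂ) (p : H) (q : H') :
      ‖a‖ ^ 2 ≤ C ^ 2 * ‖p‖ ^ 2 * ‖q‖ ^ 2 ↔ ‖a‖ ≤ C * ‖p‖ * ‖q‖ := by
    rw [← mul_pow, ← mul_pow, sq_le_sq₀ (by positivity) (by positivity)]
  simp only [KernelSqLE, IsBoundedBikernel, h.re_sum_sum_eq_norm_sq, h'.re_sum_sum_eq_norm_sq, hsq]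

end KolmogorovRep

/-- Existence and uniqueness of the intertwining operator associated to a bounded bikernel
`L` with `L² ≤ c K K'`, together with the converse. -/
theorem intertwining_operator {X : Type*} [Nonempty X] (K K' : X → X → ℂ)
    (hK : IsPosDefKernel K) (hK' : IsPosDefKernel K')
    {H : Type*} [NormedAddCommGroup H] [InnerProductSpace ℂ H] [CompleteSpace H]
    {H' : Type*} [NormedAddCommGroup H'] [InnerProductSpace ℂ H'] [CompleteSpace H']
    (v : X → H) (v' : X → H')
    (hrep : IsKolmogorovRep K H v) (hrep' : IsKolmogorovRep K' H' v') :
    (∀ (L : X → X → ℂ) (c : ℝ), 0 < c → KernelSqLE L K K' c →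
      (∃! S : H →L[ℂ] H', ∀ x y : X, ⟪v' y, S (v x)⟫_ℂ = L x y) ∧
      (∀ S : H →L[ℂ] H', (∀ x y : X, ⟪v' y, S (v x)⟫_ℂ = L x y) → ‖S‖ ≤ Real.sqrt c)) ∧
    (∀ S : H →L[ℂ] H',
      (∃! L : X → X → ℂ, ∀ x y : X, ⟪v' y, S (v x)⟫_ℂ = L x y) ∧
      (∀ L : X → X → ℂ, (∀ x y : X, ⟪v' y, S (v x)⟫_ℂ = L x y) →
        KernelSqLE L K K' (‖S‖ ^ 2))) := by
  obtain ⟨hbikernel, hoperator⟩ := intertwining_operator_general hrep.1 hrep'.1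
  refine ⟨fun L c hc hL => hbikernel L √c (Real.sqrt_nonneg c) ?_, fun S => ?_⟩
  · rwa [← kernelSqLE_sq_iff_isBoundedBikernel hrep hrep' (Real.sqrt_nonneg c), Real.sq_sqrt hc.le]
  · simpa only [kernelSqLE_sq_iff_isBoundedBikernel hrep hrep' (norm_nonneg S)] using hoperator S
end
end

section
/- Let G be a group, and let K, K' be positive definite maps on G satisfying K(x,y) = K(zx,zy) and K'(x,y) = K'(zx,zy) for all x, y, z ∈ G, and K' ≤ cK for some c > 0. Let (H_K, π_K, ξ₀) be the cyclic unitary representation associated to K. Then there exists a unique positive bounded operator S on H_K commuting with π_K(x) for every x ∈ G such that ⟨S π_K(x) ξ₀, π_K(y) ξ₀⟩ = K'(x,y) for all x, y ∈ G. Conversely, for every positive bounded operator S in the commutant of π_K(G), there is a unique positive definite map K' on G with ⟨S π_K(x) ξ₀, π_K(y) ξ₀⟩ = K'(x,y) for all x, y ∈ G, and it satisfies K'(x,y) = K'(zx,zy) for all x, y, z ∈ G. -/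
open scoped InnerProductSpace ComplexOrder Classical
open Complex

noncomputable section

/-- `(H, π, ξ₀)` is the cyclic unitary representation associated to the group positive
definite map `K`. -/
def IsGroupCyclicRep {G : Type*} [Group G] (K : G → G → ℂ)
    {H : Type*} [NormedAddCommGroup H] [InnerProductSpace ℂ H]
    (π : G →* (H ≃ₗᵢ[ℂ] H)) (ξ₀ : H) : Prop :=
  Dense (↑(Submodule.span ℂ (Set.range fun g : G => π g ξ₀)) : Set H) ∧
    ∀ x y : G, ⟪π y ξ₀, π x ξ₀⟫_ℂ = K x y

/-!
Let `v` be a Kolmogorov representation of `K` and `w` one of `K'`. The inequality `K' ≤ c K` says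
that `v x ↦ w x` extends to a bounded operator `A`, and `S = A† A` has matrix coefficients `K'`.
Since the `v x` span a dense subspace, an operator `S` is determined by the kernel
`K' (x, y) = ⟨S (v x), v y⟩`. If a unitary `U` maps each `v x` to `v (σ x)`, then `U⁻¹ S U`
has the kernel `K' (σ x, σ y)`, so `S` commutes with `U` exactly when `K'` is invariant under `σ`.
-/

section OperatorKernel

variable {𝕜 X H : Type*} [RCLike 𝕜] [NormedAddCommGroup H] [InnerProductSpace 𝕜 H]

/-- The kernel `K (x, y) = ⟨S (v x), v y⟩` of an operator `S` with respect to a family of vectors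
`v`, in the paper's convention for inner products; for `S = 1` it is the Gram kernel of `v`. -/
def opKernel (S : H →L[𝕜] H) (v : X → H) (x y : X) : 𝕜 :=
  ⟪v y, S (v x)⟫_𝕜

theorem opKernel_one (v : X → H) (x y : X) : opKernel (1 : H →L[𝕜] H) v x y = ⟪v y, v x⟫_𝕜 :=
  rfl

theorem sum_sum_opKernel {ι : Type*} [Fintype ι] (S : H →L[𝕜] H) (v : X → H) (x : ι → X)
    (ξ : ι → 𝕜) :
    ∑ i, ∑ j, opKernel S v (x i) (x j) * ξ i * (starRingEnd 𝕜) (ξ j) =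
      ⟪∑ i, ξ i • v (x i), S (∑ i, ξ i • v (x i))⟫_𝕜 := by
  simp only [opKernel, map_sum, map_smul, sum_inner, inner_sum, inner_smul_left, inner_smul_right]
  refine Finset.sum_congr rfl fun i _ => ?_
  rw [Finset.mul_sum]
  exact Finset.sum_congr rfl fun j _ => by ring

theorem opKernel_injective {v : X → H}
    (hv : Dense (Submodule.span 𝕜 (Set.range v) : Set H)) :
    Function.Injective fun S : H →L[𝕜] H => opKernel S v := by
  intro S T h
  refine ContinuousLinearMap.ext_on hv ?_
  rintro _ ⟨x, rfl⟩
  refine hv.eq_of_inner_right 𝕜 fun u hu => ?_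
  induction hu using Submodule.span_induction with
  | mem _ hu => obtain ⟨y, rfl⟩ := hu; exact congrFun₂ h x y
  | zero => simp only [inner_zero_left]
  | add _ _ _ _ h₁ h₂ => simp only [inner_add_left, h₁, h₂]
  | smul _ _ _ h => simp only [inner_smul_left, h]

theorem opKernel_conj {v : X → H} {U : H ≃ₗᵢ[𝕜] H} {σ : X → X} (hU : ∀ x, U (v x) = v (σ x))
    (S : H →L[𝕜] H) (x y : X) :
    opKernel (U.symm.toContinuousLinearEquiv.conjContinuousAlgEquiv S) v x y =
      opKernel S v (σ x) (σ y) := by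
  calc ⟪v y, U.symm (S (U (v x)))⟫_𝕜
      = ⟪U (v y), S (U (v x))⟫_𝕜 := by rw [← U.inner_map_map, U.apply_symm_apply]
    _ = ⟪v (σ y), S (v (σ x))⟫_𝕜 := by rw [hU, hU]

theorem commutes_iff_opKernel_invariant {v : X → H}
    (hv : Dense (Submodule.span 𝕜 (Set.range v) : Set H)) {U : H ≃ₗᵢ[𝕜] H} {σ : X → X}
    (hU : ∀ x, U (v x) = v (σ x)) (S : H →L[𝕜] H) :
    (∀ u, S (U u) = U (S u)) ↔ ∀ x y, opKernel S v x y = opKernel S v (σ x) (σ y) := by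
  calc (∀ u, S (U u) = U (S u))
      ↔ S = U.symm.toContinuousLinearEquiv.conjContinuousAlgEquiv S := by
        simp [ContinuousLinearMap.ext_iff, U.eq_symm_apply, eq_comm]
    _ ↔ opKernel S v = opKernel (U.symm.toContinuousLinearEquiv.conjContinuousAlgEquiv S) v :=
        (opKernel_injective hv).eq_iff.symm
    _ ↔ ∀ x y, opKernel S v x y = opKernel S v (σ x) (σ y) := by
        simp only [funext_iff, opKernel_conj hU]

end OperatorKernel

theorem IsPositiveOp.isPosDefKernel_opKernel {X H : Type*} [NormedAddCommGroup H]
    [InnerProductSpace ℂ H] {S : H →L[ℂ] H} (hS : IsPositiveOp S) (v : X → H) :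
    IsPosDefKernel (opKernel S v) := fun _ x ξ => by
  rw [sum_sum_opKernel]
  exact hS _

theorem isPositiveOp_adjoint_comp_self {H E : Type*} [NormedAddCommGroup H]
    [InnerProductSpace ℂ H] [CompleteSpace H] [NormedAddCommGroup E] [InnerProductSpace ℂ E]
    [CompleteSpace E] (A : H →L[ℂ] E) : IsPositiveOp (A.adjoint ∘L A) :=
  A.isPositive_adjoint_comp_self.inner_nonneg_right

theorem finsuppSum_eq_sum_fin {X M N : Type*} [Zero M] [AddCommMonoid N] (f : X →₀ M)
    (g : X → M → N) :
    f.sum g = ∑ i : Fin f.support.card,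
      g (f.support.equivFin.symm i) (f (f.support.equivFin.symm i)) := by
  rw [f.support.equivFin.symm.sum_comp fun x : f.support => g x (f x),
    Finset.sum_coe_sort f.support fun x => g x (f x), Finsupp.sum]

/-- A scalar kernel as a matrix of operators on `ℂ`, the form in which Mathlib builds a reproducing
kernel Hilbert space from it. Mathlib's inner products being conjugate-linear in the first variable,
the arguments of the kernel are swapped. -/
def operatorMatrix {X : Type*} (K : X → X → ℂ) : Matrix X X (ℂ →L[ℂ] ℂ) :=
  .of fun x y => ContinuousLinearMap.toSpanSingleton ℂ (K y x)

namespace IsPosDefKernel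

universe u

variable {X : Type u} {K : X → X → ℂ}

theorem conj_apply (hK : IsPosDefKernel K) (x y : X) : (starRingEnd ℂ) (K x y) = K y x := by
  have diag_im (x : X) : (K x x).im = 0 := by
    simpa using (Complex.le_def.1 (hK 1 ![x] ![1])).2.symm
  have im_add_im : (K x y).im + (K y x).im = 0 := by
    simpa [Fin.sum_univ_two, diag_im] using (Complex.le_def.1 (hK 2 ![x, y] ![1, 1])).2.symm
  have neg_re_add_re : -(K x y).re + (K y x).re = 0 := by
    simpa [Fin.sum_univ_two, diag_im] using (Complex.le_def.1 (hK 2 ![x, y] ![1, I])).2.symm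
  apply Complex.ext
  · rw [conj_re]; linarith
  · rw [conj_im]; linarith

theorem finsuppSum_nonneg_s12 (hK : IsPosDefKernel K) (f : X →₀ ℂ) :
    0 ≤ f.sum fun x a => f.sum fun y b => K x y * a * (starRingEnd ℂ) b := by
  simp only [finsuppSum_eq_sum_fin f]
  exact hK _ _ _

theorem isHermitian_operatorMatrix (hK : IsPosDefKernel K) : (operatorMatrix K).IsHermitian := by
  ext x y
  simp [operatorMatrix, ContinuousLinearMap.star_eq_adjoint,
    ContinuousLinearMap.adjoint_toSpanSingleton, hK.conj_apply]

theorem posSemidef_operatorMatrix (hK : IsPosDefKernel K) : (operatorMatrix K).PosSemidef := by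
  refine (RKHS.posSemidef_tfae.out 0 2).mpr ?_
  refine ⟨hK.isHermitian_operatorMatrix, fun f => ?_⟩
  have inner_eq (x y : X) (a b : ℂ) :
      ⟪operatorMatrix K x y b, a⟫_ℂ = K x y * a * (starRingEnd ℂ) b := by
    calc ⟪b * K y x, a⟫_ℂ = a * ((starRingEnd ℂ) b * (starRingEnd ℂ) (K y x)) := by simp
      _ = K x y * a * (starRingEnd ℂ) b := by rw [hK.conj_apply]; ring
  rw [Finsupp.sum_comm]
  simp only [inner_eq]
  exact (Complex.le_def.1 (hK.finsuppSum_nonneg_s12 f)).1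

theorem exists_isKolmogorovRep (hK : IsPosDefKernel K) :
    ∃ (E : Type u) (_ : NormedAddCommGroup E) (_ : InnerProductSpace ℂ E) (_ : CompleteSpace E)
      (w : X → E), IsKolmogorovRep K E w := by
  have : Fact (operatorMatrix K).PosSemidef := ⟨hK.posSemidef_operatorMatrix⟩
  refine ⟨RKHS.OfKernel (operatorMatrix K), inferInstance, inferInstance, inferInstance,
    fun x => RKHS.kerFun _ x 1, ?_, fun x y => ?_⟩
  · rw [Submodule.dense_iff_topologicalClosure_eq_top, eq_top_iff,
      ← RKHS.kerFun_dense (RKHS.OfKernel (operatorMatrix K))]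
    refine Submodule.topologicalClosure_mono (Submodule.span_le.2 ?_)
    rintro _ ⟨x, a, rfl⟩
    have : RKHS.kerFun (RKHS.OfKernel (operatorMatrix K)) x a =
        a • RKHS.kerFun (RKHS.OfKernel (operatorMatrix K)) x 1 := by
      rw [← map_smul, smul_eq_mul, mul_one]
    rw [SetLike.mem_coe, this]
    exact Submodule.smul_mem _ a (Submodule.subset_span ⟨x, rfl⟩)
  · rw [RKHS.kerFun_inner, RKHS.kerFun_apply, RKHS.OfKernel.kernel_ofKernel]
    simp [operatorMatrix]

end IsPosDefKernel

section Domination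

variable {X H E : Type*} {K K' : X → X → ℂ} {c : ℝ}
  [NormedAddCommGroup H] [InnerProductSpace ℂ H] [NormedAddCommGroup E] [InnerProductSpace ℂ E]
  {v : X → H} {w : X → E}

theorem sum_sum_gram_eq_norm_sq (hv : ∀ x y, ⟪v y, v x⟫_ℂ = K x y) {ι : Type*} [Fintype ι]
    (x : ι → X) (ξ : ι → ℂ) :
    ∑ i, ∑ j, K (x i) (x j) * ξ i * (starRingEnd ℂ) (ξ j) =
      ((‖∑ i, ξ i • v (x i)‖ ^ 2 : ℝ) : ℂ) := by
  simp only [← hv, ← opKernel_one]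
  rw [sum_sum_opKernel, one_apply_eq_self, inner_self_eq_norm_sq_to_K]
  norm_cast

theorem KernelLE.norm_linearCombination_le (hle : KernelLE K' K c)
    (hv : ∀ x y, ⟪v y, v x⟫_ℂ = K x y) (hw : ∀ x y, ⟪w y, w x⟫_ℂ = K' x y) (f : X →₀ ℂ) :
    ‖Finsupp.linearCombination ℂ w f‖ ≤ √c * ‖Finsupp.linearCombination ℂ v f‖ := by
  have norm_sq_le : ‖Finsupp.linearCombination ℂ w f‖ ^ 2 ≤
      c * ‖Finsupp.linearCombination ℂ v f‖ ^ 2 := by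
    simp only [Finsupp.linearCombination_apply, finsuppSum_eq_sum_fin f]
    have := hle _ (fun i => f.support.equivFin.symm i) fun i => f (f.support.equivFin.symm i)
    rw [sum_sum_gram_eq_norm_sq hv, sum_sum_gram_eq_norm_sq hw] at this
    exact_mod_cast this
  calc ‖Finsupp.linearCombination ℂ w f‖
      ≤ √(c * ‖Finsupp.linearCombination ℂ v f‖ ^ 2) := Real.le_sqrt_of_sq_le norm_sq_le
    _ = √c * ‖Finsupp.linearCombination ℂ v f‖ := by
        rw [Real.sqrt_mul' _ (sq_nonneg _), Real.sqrt_sq (norm_nonneg _)]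

theorem KernelLE.exists_clm_apply_eq [CompleteSpace E] (hle : KernelLE K' K c)
    (hv : IsKolmogorovRep K H v) (hw : ∀ x y, ⟪w y, w x⟫_ℂ = K' x y) :
    ∃ A : H →L[ℂ] E, ∀ x, A (v x) = w x := by
  have dense : DenseRange (Finsupp.linearCombination ℂ v) := by
    rw [DenseRange, ← LinearMap.coe_range, Finsupp.range_linearCombination]
    exact hv.1
  refine ⟨(Finsupp.linearCombination ℂ w).extendOfNorm (Finsupp.linearCombination ℂ v),
    fun x => ?_⟩
  simpa using LinearMap.extendOfNorm_eq dense ⟨√c, hle.norm_linearCombination_le hv.2 hw⟩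
    (Finsupp.single x 1)

theorem KernelLE.exists_isPositiveOp_opKernel_eq [CompleteSpace H] (hle : KernelLE K' K c)
    (hK' : IsPosDefKernel K') (hv : IsKolmogorovRep K H v) :
    ∃ S : H →L[ℂ] H, IsPositiveOp S ∧ opKernel S v = K' := by
  obtain ⟨E, _, _, _, w, hw⟩ := hK'.exists_isKolmogorovRep
  obtain ⟨A, hA⟩ := hle.exists_clm_apply_eq hv hw.2
  refine ⟨A.adjoint ∘L A, isPositiveOp_adjoint_comp_self A, ?_⟩
  ext x y
  calc ⟪v y, A.adjoint (A (v x))⟫_ℂ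
      = ⟪A (v y), A (v x)⟫_ℂ := A.adjoint_inner_right _ _
    _ = K' x y := by rw [hA, hA, hw.2]

end Domination

theorem group_commutant_positive_operators_general {X G : Type*} [SMul G X] {K : X → X → ℂ}
    {H : Type*} [NormedAddCommGroup H] [InnerProductSpace ℂ H] [CompleteSpace H] {v : X → H}
    (hv : IsKolmogorovRep K H v) (π : G → (H ≃ₗᵢ[ℂ] H)) (hπ : ∀ g x, π g (v x) = v (g • x)) :
    (∀ (K' : X → X → ℂ) (c : ℝ), IsPosDefKernel K' →
      (∀ (x y : X) (g : G), K' x y = K' (g • x) (g • y)) → KernelLE K' K c →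
      ∃! S : H →L[ℂ] H,
        IsPositiveOp S ∧ (∀ (g : G) (u : H), S (π g u) = π g (S u)) ∧
          (∀ x y : X, ⟪v y, S (v x)⟫_ℂ = K' x y)) ∧
    (∀ S : H →L[ℂ] H, IsPositiveOp S → (∀ (g : G) (u : H), S (π g u) = π g (S u)) →
      (∃! K' : X → X → ℂ, ∀ x y : X, ⟪v y, S (v x)⟫_ℂ = K' x y) ∧
      (∀ K' : X → X → ℂ, (∀ x y : X, ⟪v y, S (v x)⟫_ℂ = K' x y) →
        IsPosDefKernel K' ∧ ∀ (x y : X) (g : G), K' x y = K' (g • x) (g • y))) := by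
  have opKernel_eq_iff (S : H →L[ℂ] H) (K' : X → X → ℂ) :
      (∀ x y, ⟪v y, S (v x)⟫_ℂ = K' x y) ↔ opKernel S v = K' := by
    simp only [funext_iff, opKernel]
  have commutes_iff (S : H →L[ℂ] H) (g : G) := commutes_iff_opKernel_invariant hv.1 (hπ g) S
  simp only [opKernel_eq_iff]
  refine ⟨fun K' c hK' hinv hle => ?_, fun S hS hcomm => ⟨existsUnique_eq', ?_⟩⟩
  · obtain ⟨S, hS, rfl⟩ := hle.exists_isPositiveOp_opKernel_eq hK' hv
    exact ⟨S, ⟨hS, fun g => (commutes_iff S g).2 fun x y => hinv x y g, rfl⟩,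
      fun T hT => opKernel_injective hv.1 hT.2.2⟩
  · rintro _ rfl
    exact ⟨hS.isPosDefKernel_opKernel v, fun x y g => (commutes_iff S g).1 (hcomm g) x y⟩

/-- Positive operators in the commutant of the cyclic unitary representation of a group
positive definite map `K` correspond to invariant positive definite maps `K' ≤ c K`. -/
theorem group_commutant_positive_operators {G : Type*} [Group G] (K : G → G → ℂ)
    (hK : IsPosDefKernel K) (hKinv : ∀ x y z : G, K x y = K (z * x) (z * y))
    {H : Type*} [NormedAddCommGroup H] [InnerProductSpace ℂ H] [CompleteSpace H]
    (π : G →* (H ≃ₗᵢ[ℂ] H)) (ξ₀ : H) (hrep : IsGroupCyclicRep K π ξ₀) :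
    (∀ (K' : G → G → ℂ) (c : ℝ), 0 < c → IsPosDefKernel K' →
      (∀ x y z : G, K' x y = K' (z * x) (z * y)) → KernelLE K' K c →
      ∃! S : H →L[ℂ] H,
        IsPositiveOp S ∧ (∀ (g : G) (v : H), S (π g v) = π g (S v)) ∧
          (∀ x y : G, ⟪π y ξ₀, S (π x ξ₀)⟫_ℂ = K' x y)) ∧
    (∀ S : H →L[ℂ] H, IsPositiveOp S → (∀ (g : G) (v : H), S (π g v) = π g (S v)) →
      (∃! K' : G → G → ℂ, ∀ x y : G, ⟪π y ξ₀, S (π x ξ₀)⟫_ℂ = K' x y) ∧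
      (∀ K' : G → G → ℂ, (∀ x y : G, ⟪π y ξ₀, S (π x ξ₀)⟫_ℂ = K' x y) →
        IsPosDefKernel K' ∧ ∀ x y z : G, K' x y = K' (z * x) (z * y))) := by
  have general := group_commutant_positive_operators_general hrep π fun g x => by simp
  exact ⟨fun K' c _ => general.1 K' c, general.2⟩
end
end
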